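/- arXiv:1703.10434 — 7 statements merged into one kernel-verified Lean document; each statement's English description precedes it below -/
import Mathlib

section
/- Localisation Lemma: Let N be a number operator on ℂ^d and let F be a covariant phase POM for N. Then for every eigenvector unit vector v of N and every Borel X ⊆ [0,2π), ⟨v, F(X) v⟩ = λ(X)/(2π) (λ = Lebesgue measure), hence tr(F(X)) = d·λ(X)/(2π), and consequently for every state ρ on ℂ^d, tr(ρ F(X)) ≤ d·λ(X)/(2π). -/
open Matrix MeasureTheory
open scoped Kronecker ComplexOrder

noncomputable section

instance : Fact (0 < 2 * Real.pi) := ⟨by positivity⟩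

/-- `U(θ) = exp(iθN) = ∑ₙ e^{inθ} Pₙ` for a number operator `N = ∑ₙ n Pₙ`. -/
def phaseUnitary {d : ℕ} (S : Finset ℤ) (P : ℤ → Matrix (Fin d) (Fin d) ℂ) (θ : ℝ) :
    Matrix (Fin d) (Fin d) ℂ :=
  ∑ n ∈ S, Complex.exp (Complex.I * (n : ℂ) * (θ : ℂ)) • P n

theorem invariant_key (f : Set (AddCircle (2 * Real.pi)) → ℂ)
    (hpos : ∀ X, MeasurableSet X → 0 ≤ f X)
    (hadd : ∀ g : ℕ → Set (AddCircle (2 * Real.pi)),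
      (∀ k, MeasurableSet (g k)) → Pairwise (Function.onFun Disjoint g) →
      HasSum (fun k => f (g k)) (f (⋃ k, g k)))
    (hinv : ∀ (θ : ℝ) (X : Set (AddCircle (2 * Real.pi))), MeasurableSet X →
      f ((· + ((θ : ℝ) : AddCircle (2 * Real.pi))) '' X) = f X)
    (X : Set (AddCircle (2 * Real.pi))) (hX : MeasurableSet X) :
    f X = (((f Set.univ).re * (volume X).toReal / (2 * Real.pi) : ℝ) : ℂ) := by
  have hre : ∀ X, MeasurableSet X → 0 ≤ (f X).re := fun X hX => (Complex.nonneg_iff.1 (hpos X hX)).1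
  have hofre : ∀ X, MeasurableSet X → f X = ((f X).re : ℂ) := fun X hX =>
    Complex.ext rfl (by simpa using (Complex.nonneg_iff.1 (hpos X hX)).2.symm)
  have hempty : f ∅ = 0 := by
    have h := (hadd (fun _ => ∅) (fun _ => MeasurableSet.empty)
      (fun i j _ => by simp [Function.onFun])).summable
    exact (summable_const_iff _).1 h
  let μ : Measure (AddCircle (2 * Real.pi)) :=
    Measure.ofMeasurable (fun s _ => ENNReal.ofReal (f s).re) (by simp [hempty])
      (fun g hg hd => by
        have h : HasSum (fun k => (f (g k)).re) (f (⋃ k, g k)).re :=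
          Complex.hasSum_re (hadd g hg hd)
        rw [← h.tsum_eq, ENNReal.ofReal_tsum_of_nonneg (fun k => hre _ (hg k)) h.summable])
  have hμ : ∀ s, MeasurableSet s → μ s = ENNReal.ofReal (f s).re := fun s hs =>
    Measure.ofMeasurable_apply s hs
  have hfin : IsFiniteMeasure μ := ⟨by rw [hμ _ MeasurableSet.univ]; exact ENNReal.ofReal_lt_top⟩
  have hli : μ.IsAddLeftInvariant := by
    refine ⟨fun a => ?_⟩
    ext s hs
    rw [Measure.map_apply (measurable_const_add a) hs, hμ _ (measurable_const_add a hs), hμ _ hs]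
    obtain ⟨θ, hθ⟩ := QuotientAddGroup.mk_surjective (-a)
    have h := hinv θ s hs
    have h2 : ((· + ((θ : ℝ) : AddCircle (2 * Real.pi))) '' s) = (fun x => a + x) ⁻¹' s := by
      have : ((θ : ℝ) : AddCircle (2 * Real.pi)) = -a := hθ
      rw [this, Set.image_add_right, neg_neg]
      ext x; simp [add_comm]
    rw [← h2, h]
  have hs := Measure.isAddInvariant_eq_smul_of_compactSpace μ
    (volume : Measure (AddCircle (2 * Real.pi)))
  set c := Measure.addHaarScalarFactor μ (volume : Measure (AddCircle (2 * Real.pi)))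
  have hval : ∀ s, MeasurableSet s → (f s).re = c * (volume s).toReal := by
    intro s hs'
    have h1 := hμ s hs'
    rw [hs] at h1
    have h2 := congrArg ENNReal.toReal h1
    rw [ENNReal.toReal_ofReal (hre s hs')] at h2
    rw [← h2]
    simp
  have hu := hval _ MeasurableSet.univ
  rw [AddCircle.measure_univ, ENNReal.toReal_ofReal (by positivity)] at hu
  rw [hofre X hX, hval X hX, hu]
  congr 1
  field_simp

open scoped MatrixOrder Matrix.Norms.L2Operator in
theorem psd_factor {d : ℕ} (A : Matrix (Fin d) (Fin d) ℂ) (hA : A.PosSemidef) :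
    ∃ C : Matrix (Fin d) (Fin d) ℂ, A = Cᴴ * C :=
  CStarAlgebra.nonneg_iff_eq_star_mul_self.mp hA.nonneg

theorem trace_key {d : ℕ} (A B : Matrix (Fin d) (Fin d) ℂ) (hA : A.PosSemidef)
    (hB : B.PosSemidef) : (A * B).trace.re ≤ A.trace.re * B.trace.re := by
  obtain ⟨C, rfl⟩ := psd_factor _ hA
  obtain ⟨D, rfl⟩ := psd_factor _ hB
  letI := @Matrix.frobeniusSeminormedAddCommGroup (Fin d) (Fin d) ℂ _ _ _
  have hn : ∀ M : Matrix (Fin d) (Fin d) ℂ, (Mᴴ * M).trace.re = ‖M‖ ^ 2 := by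
    intro M
    rw [Matrix.frobenius_norm_def, ← Real.sqrt_eq_rpow, Real.sq_sqrt (by positivity),
      Finset.sum_comm]
    simp only [Matrix.trace, Matrix.diag, Matrix.mul_apply, Complex.re_sum,
      Matrix.conjTranspose_apply]
    refine Finset.sum_congr rfl fun i _ => Finset.sum_congr rfl fun j _ => ?_
    rw [Real.rpow_two, ← Complex.normSq_eq_norm_sq, Complex.normSq_apply]
    simp
  have h1 : (Cᴴ * C * (Dᴴ * D)).trace = ((C * Dᴴ)ᴴ * (C * Dᴴ)).trace := by
    rw [Matrix.conjTranspose_mul, Matrix.conjTranspose_conjTranspose, ← Matrix.mul_assoc,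
      Matrix.trace_mul_comm]
    simp only [Matrix.mul_assoc]
  rw [h1, hn, hn, hn, ← mul_pow]
  have h2 : ‖Dᴴ‖ = ‖D‖ := Matrix.frobenius_norm_conjTranspose D
  have h3 := Matrix.frobenius_norm_mul C Dᴴ
  rw [h2] at h3
  exact pow_le_pow_left₀ (norm_nonneg _) h3 2

/-- **Localisation Lemma.** For a covariant phase POM `F` for a number operator `N` on `ℂ^d`:
every unit eigenvector of `N` has uniform phase distribution `λ(X)/(2π)`, hence
`tr F(X) = d·λ(X)/(2π)`, and consequently `tr(ρ F(X)) ≤ d·λ(X)/(2π)` for every state `ρ`. -/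
theorem localisation_lemma {d : ℕ}
    (S : Finset ℤ) (P : ℤ → Matrix (Fin d) (Fin d) ℂ)
    (hHerm : ∀ n, (P n).IsHermitian)
    (hIdem : ∀ n, P n * P n = P n)
    (hOrth : ∀ n m, n ≠ m → P n * P m = 0)
    (hSupp : ∀ n, n ∉ S → P n = 0)
    (hSum : ∑ n ∈ S, P n = 1)
    (N : Matrix (Fin d) (Fin d) ℂ)
    (hN : N = ∑ n ∈ S, (n : ℂ) • P n)
    (F : Set (AddCircle (2 * Real.pi)) → Matrix (Fin d) (Fin d) ℂ)
    (hFpos : ∀ X, MeasurableSet X → (F X).PosSemidef)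
    (hFuniv : F Set.univ = 1)
    (hFadd : ∀ g : ℕ → Set (AddCircle (2 * Real.pi)),
      (∀ k, MeasurableSet (g k)) → Pairwise (Function.onFun Disjoint g) →
      ∀ i j, HasSum (fun k => F (g k) i j) (F (⋃ k, g k) i j))
    (hFcov : ∀ (θ : ℝ) (X : Set (AddCircle (2 * Real.pi))), MeasurableSet X →
      phaseUnitary S P θ * F X * (phaseUnitary S P θ)ᴴ
        = F ((· + ((θ : ℝ) : AddCircle (2 * Real.pi))) '' X)) :
    (∀ v : Fin d → ℂ, star v ⬝ᵥ v = 1 → (∃ μ : ℂ, N.mulVec v = μ • v) →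
      ∀ X : Set (AddCircle (2 * Real.pi)), MeasurableSet X →
        star v ⬝ᵥ (F X).mulVec v = (((volume X).toReal / (2 * Real.pi) : ℝ) : ℂ)) ∧
    (∀ X : Set (AddCircle (2 * Real.pi)), MeasurableSet X →
      (F X).trace = (((d : ℝ) * (volume X).toReal / (2 * Real.pi) : ℝ) : ℂ)) ∧
    (∀ ρ : Matrix (Fin d) (Fin d) ℂ, ρ.PosSemidef → ρ.trace = 1 →
      ∀ X : Set (AddCircle (2 * Real.pi)), MeasurableSet X →
        ((ρ * F X).trace).re ≤ (d : ℝ) * (volume X).toReal / (2 * Real.pi)) := by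
  have hUstar : ∀ θ : ℝ, (phaseUnitary S P θ)ᴴ
      = ∑ n ∈ S, (starRingEnd ℂ) (Complex.exp (Complex.I * (n : ℂ) * (θ : ℂ))) • P n := by
    intro θ
    rw [phaseUnitary, Matrix.conjTranspose_sum]
    refine Finset.sum_congr rfl fun n _ => ?_
    rw [Matrix.conjTranspose_smul, (hHerm n).eq]; rfl
  have hexp : ∀ (n : ℤ) (θ : ℝ),
      (starRingEnd ℂ) (Complex.exp (Complex.I * (n : ℂ) * (θ : ℂ)))
        * Complex.exp (Complex.I * (n : ℂ) * (θ : ℂ)) = 1 := by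
    intro n θ
    rw [← Complex.exp_conj, ← Complex.exp_add]
    simp
  have hPU : ∀ (n : ℤ), n ∈ S → ∀ (c : ℤ → ℂ), P n * ∑ m ∈ S, c m • P m = c n • P n := by
    intro n hn c
    rw [Finset.mul_sum, Finset.sum_eq_single n]
    · rw [Matrix.mul_smul, hIdem]
    · intro m _ hm
      rw [Matrix.mul_smul, hOrth n m hm.symm, smul_zero]
    · exact fun h => absurd hn h
  have hUU : ∀ θ : ℝ, (phaseUnitary S P θ)ᴴ * phaseUnitary S P θ = 1 := by
    intro θ
    rw [hUstar, Finset.sum_mul, ← hSum]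
    refine Finset.sum_congr rfl fun n hn => ?_
    rw [phaseUnitary, Matrix.smul_mul, hPU n hn, smul_smul, hexp, one_smul]
  have htr : ∀ X : Set (AddCircle (2 * Real.pi)), MeasurableSet X →
      (F X).trace = (((d : ℝ) * (volume X).toReal / (2 * Real.pi) : ℝ) : ℂ) := by
    intro X hX
    have h := invariant_key (fun X => (F X).trace) (fun X hX => (hFpos X hX).trace_nonneg)
      (fun g hg hd => by
        simp only [Matrix.trace, Matrix.diag]
        exact hasSum_sum fun i _ => hFadd g hg hd i i)
      (fun θ X hX => by
        simp only [← hFcov θ X hX]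
        rw [Matrix.trace_mul_comm, ← Matrix.mul_assoc, hUU, Matrix.one_mul]) X hX
    simpa [hFuniv] using h
  refine ⟨?_, htr, ?_⟩
  · rintro v hv ⟨μ, hμ⟩ X hX
    have hPv : ∀ n ∈ S, (n : ℂ) • (P n).mulVec v = μ • (P n).mulVec v := by
      intro n hn
      rw [← Matrix.mulVec_smul _ μ, ← hμ, Matrix.mulVec_mulVec, hN, hPU n hn, Matrix.smul_mulVec]
    have hvsum : ∑ n ∈ S, (P n).mulVec v = v := by
      rw [← Matrix.sum_mulVec, hSum, Matrix.one_mulVec]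
    obtain ⟨n, hn, hne⟩ : ∃ n ∈ S, (P n).mulVec v ≠ 0 := by
      by_contra! hcon
      rw [Finset.sum_eq_zero hcon] at hvsum
      rw [← hvsum] at hv
      simp at hv
    have hnμ : (n : ℂ) = μ := by
      have h := hPv n hn
      rw [← sub_eq_zero, ← sub_smul] at h
      exact sub_eq_zero.1 ((smul_eq_zero.1 h).resolve_right hne)
    have hzero : ∀ m ∈ S, m ≠ n → (P m).mulVec v = 0 := by
      intro m hm hmn
      have h := hPv m hm
      rw [← sub_eq_zero, ← sub_smul, ← hnμ] at h
      refine (smul_eq_zero.1 h).resolve_left fun h => hmn ?_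
      exact_mod_cast sub_eq_zero.1 h
    have hPn : (P n).mulVec v = v := by
      rw [Finset.sum_eq_single_of_mem n hn hzero] at hvsum
      exact hvsum
    have hUv : ∀ θ : ℝ, (phaseUnitary S P θ)ᴴ.mulVec v
        = (starRingEnd ℂ) (Complex.exp (Complex.I * (n : ℂ) * (θ : ℂ))) • v := by
      intro θ
      rw [hUstar, Matrix.sum_mulVec, Finset.sum_eq_single_of_mem n hn]
      · rw [Matrix.smul_mulVec, hPn]
      · intro m hm hmn
        rw [Matrix.smul_mulVec, hzero m hm hmn, smul_zero]
    have h := invariant_key (fun X => star v ⬝ᵥ (F X).mulVec v)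
      (fun X hX => (hFpos X hX).dotProduct_mulVec_nonneg v)
      (fun g hg hd => by
        simp only [dotProduct, Matrix.mulVec]
        exact hasSum_sum fun i _ => HasSum.mul_left _
          (hasSum_sum fun j _ => HasSum.mul_right _ (hFadd g hg hd i j)))
      (fun θ X hX => by
        simp only [← hFcov θ X hX]
        have h1 : star v ᵥ* phaseUnitary S P θ = star ((phaseUnitary S P θ)ᴴ.mulVec v) := by
          rw [Matrix.star_mulVec, Matrix.conjTranspose_conjTranspose]
        rw [← Matrix.mulVec_mulVec, ← Matrix.mulVec_mulVec, Matrix.dotProduct_mulVec, h1, hUv,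
          Matrix.mulVec_smul, star_smul, smul_dotProduct, dotProduct_smul, smul_smul]
        have h2 := hexp n θ
        rw [mul_comm] at h2
        rw [← starRingEnd_apply, Complex.conj_conj, h2, one_smul]) X hX
    simpa [hFuniv, hv] using h
  · intro ρ hρ hρ1 X hX
    have h := trace_key ρ (F X) hρ (hFpos X hX)
    rw [hρ1, htr X hX, Complex.ofReal_re] at h
    simpa using h

end
end

section
/- Invariance of relativised quantities: For every d_S×d_S matrix A and every h ∈ G, (U_S(h) ⊗ U_R(h)) ¥(A) (U_S(h) ⊗ U_R(h))* = ¥(A). Moreover, if A is invariant under the representation U_S, i.e. U_S(h) A U_S(h)* = A for all h ∈ G, then ¥(A) = A ⊗ 1. -/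
open Matrix MeasureTheory
open scoped Kronecker ComplexOrder

noncomputable section

/-- The relativisation map
`¥(A) = ∫_G (U_S(g) A U_S(g)*) ⊗ (U_R(g) T U_R(g)*) dμ(g)`, defined entrywise. -/
def yen {G : Type*} [MeasurableSpace G] {dS dR : ℕ} (μ : Measure G)
    (US : G → Matrix (Fin dS) (Fin dS) ℂ) (UR : G → Matrix (Fin dR) (Fin dR) ℂ)
    (T : Matrix (Fin dR) (Fin dR) ℂ) (A : Matrix (Fin dS) (Fin dS) ℂ) :
    Matrix (Fin dS × Fin dR) (Fin dS × Fin dR) ℂ :=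
  Matrix.of fun p q =>
    ∫ g, ((US g * A * (US g)ᴴ) ⊗ₖ (UR g * T * (UR g)ᴴ)) p q ∂μ

/-- **Invariance of relativised quantities**: `¥(A)` is invariant under `U_S ⊗ U_R`, and if
`A` is invariant under `U_S` then `¥(A) = A ⊗ 1`. -/
theorem yen_invariance {G : Type*} [Group G] [TopologicalSpace G] [IsTopologicalGroup G]
    [CompactSpace G] [MeasurableSpace G] [BorelSpace G]
    (μ : Measure G) [μ.IsHaarMeasure]
    {dS dR : ℕ}
    (US : G → Matrix (Fin dS) (Fin dS) ℂ)
    (hUSunit : ∀ g, US g ∈ Matrix.unitaryGroup (Fin dS) ℂ)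
    (hUShom : ∀ g h, US (g * h) = US g * US h) (hUSone : US 1 = 1)
    (hUScont : Continuous US)
    (UR : G → Matrix (Fin dR) (Fin dR) ℂ)
    (hURunit : ∀ g, UR g ∈ Matrix.unitaryGroup (Fin dR) ℂ)
    (hURhom : ∀ g h, UR (g * h) = UR g * UR h) (hURone : UR 1 = 1)
    (hURcont : Continuous UR)
    (T : Matrix (Fin dR) (Fin dR) ℂ) (hT : T.PosSemidef)
    (hTnorm : ∀ i j, (∫ g, (UR g * T * (UR g)ᴴ) i j ∂μ)
      = (1 : Matrix (Fin dR) (Fin dR) ℂ) i j) :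
    (∀ (A : Matrix (Fin dS) (Fin dS) ℂ) (h : G),
      (US h ⊗ₖ UR h) * yen μ US UR T A * (US h ⊗ₖ UR h)ᴴ = yen μ US UR T A) ∧
    (∀ A : Matrix (Fin dS) (Fin dS) ℂ, (∀ h : G, US h * A * (US h)ᴴ = A) →
      yen μ US UR T A = A ⊗ₖ (1 : Matrix (Fin dR) (Fin dR) ℂ)) := by
  constructor
  · intro A h
    set F : G → Matrix (Fin dS × Fin dR) (Fin dS × Fin dR) ℂ :=
      fun g => (US g * A * (US g)ᴴ) ⊗ₖ (UR g * T * (UR g)ᴴ) with hF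
    have hFcont : Continuous F := by
      have h1 : Continuous fun g => US g * A * (US g)ᴴ :=
        (hUScont.mul continuous_const).mul hUScont.matrix_conjTranspose
      have h2 : Continuous fun g => UR g * T * (UR g)ᴴ :=
        (hURcont.mul continuous_const).mul hURcont.matrix_conjTranspose
      refine continuous_matrix fun p q => ?_
      exact (h1.matrix_elem p.1 q.1).mul (h2.matrix_elem p.2 q.2)
    have hint : ∀ p q, Integrable (fun g => F g p q) μ := fun p q =>
      (hFcont.matrix_elem p q).integrable_of_hasCompactSupport
        (HasCompactSupport.of_compactSpace _)
    have hmul : ∀ g, F (h * g) = (US h ⊗ₖ UR h) * F g * (US h ⊗ₖ UR h)ᴴ := by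
      intro g
      simp only [hF, hUShom, hURhom, conjTranspose_kronecker, ← mul_kronecker_mul,
        conjTranspose_mul, Matrix.mul_assoc]
    ext p q
    have hR : yen μ US UR T A p q = ∫ g, F (h * g) p q ∂μ := by
      rw [integral_mul_left_eq_self (fun g => F g p q) h]
      rfl
    have hY : ∀ p q, yen μ US UR T A p q = ∫ g, F g p q ∂μ := fun _ _ => rfl
    rw [hR]
    simp only [hmul, Matrix.mul_apply, hY]
    rw [integral_finsetSum]
    · refine Finset.sum_congr rfl fun j _ => ?_
      rw [integral_mul_const, integral_finsetSum]
      · simp only [integral_const_mul]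
      · intro i _
        exact (hint _ _).const_mul _
    · intro j _
      exact (integrable_finsetSum _ fun i _ => (hint _ _).const_mul _).mul_const _
  · intro A hA
    ext p q
    simp only [yen, Matrix.of_apply, hA, kroneckerMap_apply]
    rw [integral_const_mul, hTnorm]

end
end

section
/- Multiplicativity of the relativisation map for projection-valued reference: When the covariant reference POM is projection valued, ¥ is multiplicative: ¥(AB) = ¥(A)·¥(B) for all d_S×d_S matrices A, B; together with linearity, unitality and adjoint-preservation this makes ¥ a unital *-homomorphism. -/
open Matrix
open scoped Kronecker ComplexOrder

noncomputable section

/-- The relativisation map for a finite group with projection-valued reference: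
`¥(A) = ∑_{g ∈ G} (U_S(g) A U_S(g)*) ⊗ P_g`. -/
def yenFin {G : Type*} [Fintype G] {dS dR : ℕ}
    (US : G → Matrix (Fin dS) (Fin dS) ℂ) (P : G → Matrix (Fin dR) (Fin dR) ℂ)
    (A : Matrix (Fin dS) (Fin dS) ℂ) :
    Matrix (Fin dS × Fin dR) (Fin dS × Fin dR) ℂ :=
  ∑ g : G, (US g * A * (US g)ᴴ) ⊗ₖ P g

/-- **Multiplicativity of the relativisation map for projection-valued reference**: when the
covariant reference POM is projection valued, `¥(AB) = ¥(A)·¥(B)`; together with linearity,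
unitality and adjoint-preservation, `¥` is a unital *-homomorphism. -/
theorem yenFin_mul {G : Type*} [Fintype G] [Group G] {dS dR : ℕ}
    (US : G → Matrix (Fin dS) (Fin dS) ℂ)
    (hUSunit : ∀ g, US g ∈ Matrix.unitaryGroup (Fin dS) ℂ)
    (hUShom : ∀ g h, US (g * h) = US g * US h) (hUSone : US 1 = 1)
    (P : G → Matrix (Fin dR) (Fin dR) ℂ)
    (hPh : ∀ g, (P g).IsHermitian)
    (hPi : ∀ g, P g * P g = P g)
    (hPo : ∀ g h, g ≠ h → P g * P h = 0)
    (hPs : ∑ g : G, P g = 1) :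
    (∀ A B : Matrix (Fin dS) (Fin dS) ℂ,
      yenFin US P (A * B) = yenFin US P A * yenFin US P B) ∧
    (∀ A B : Matrix (Fin dS) (Fin dS) ℂ,
      yenFin US P (A + B) = yenFin US P A + yenFin US P B) ∧
    (∀ (c : ℂ) (A : Matrix (Fin dS) (Fin dS) ℂ),
      yenFin US P (c • A) = c • yenFin US P A) ∧
    (yenFin US P 1 = 1) ∧
    (∀ A : Matrix (Fin dS) (Fin dS) ℂ, yenFin US P Aᴴ = (yenFin US P A)ᴴ) := by
  have hU : ∀ g, (US g)ᴴ * US g = 1 := fun g => by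
    have := (Matrix.mem_unitaryGroup_iff').1 (hUSunit g)
    rwa [Matrix.star_eq_conjTranspose] at this
  have hU2 : ∀ g, US g * (US g)ᴴ = 1 := fun g => by
    have := (Matrix.mem_unitaryGroup_iff).1 (hUSunit g)
    rwa [Matrix.star_eq_conjTranspose] at this
  refine ⟨fun A B => ?_, fun A B => ?_, fun c A => ?_, ?_, fun A => ?_⟩
  · unfold yenFin
    rw [Finset.sum_mul_sum]
    refine Finset.sum_congr rfl fun g _ => ?_
    rw [Finset.sum_eq_single g]
    · rw [← Matrix.mul_kronecker_mul, hPi]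
      congr 1
      calc US g * (A * B) * (US g)ᴴ = US g * A * 1 * B * (US g)ᴴ := by
            simp only [Matrix.mul_one, Matrix.mul_assoc]
        _ = _ := by rw [← hU g]; simp only [Matrix.mul_assoc]
    · intro h _ hne
      rw [← Matrix.mul_kronecker_mul, hPo g h hne.symm, Matrix.kronecker_zero]
    · simp
  · simp only [yenFin, Matrix.mul_add, Matrix.add_mul, Matrix.add_kronecker,
      Finset.sum_add_distrib]
  · simp only [yenFin, Matrix.mul_smul, Matrix.smul_mul, Matrix.smul_kronecker, Finset.smul_sum]
  · simp only [yenFin, Matrix.mul_one, hU2]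
    rw [← Matrix.one_kronecker_one, ← hPs]
    ext i j
    simp [Matrix.sum_apply, Matrix.kroneckerMap_apply, Finset.mul_sum]
  · simp only [yenFin, Matrix.conjTranspose_sum, Matrix.conjTranspose_kronecker,
      Matrix.conjTranspose_mul, Matrix.conjTranspose_conjTranspose, (hPh _).eq, Matrix.mul_assoc]

end
end

section
/- Exact recovery of absolute quantities for finite groups: Let e be the identity element of the finite group G and let φ ∈ ℂ^{d_R} be a unit vector with P_e φ = φ (a reference state perfectly localised at the identity). Then for every d_S×d_S matrix A and every vector v ∈ ℂ^{d_S}, ⟨v ⊗ φ, ¥(A)(v ⊗ φ)⟩ = ⟨v, A v⟩; that is, all expectation values of A are exactly those of the relativised invariant quantity ¥(A) in the reference state φ. -/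
open Matrix
open scoped Kronecker ComplexOrder

noncomputable section

/-- The tensor product of vectors: `(v ⊗ φ)(i,j) = v i · φ j`. -/
def vtens {dS dR : ℕ} (v : Fin dS → ℂ) (φ : Fin dR → ℂ) : Fin dS × Fin dR → ℂ :=
  fun p => v p.1 * φ p.2

theorem kron_mulVec_vtens {dS dR : ℕ} (B : Matrix (Fin dS) (Fin dS) ℂ)
    (Q : Matrix (Fin dR) (Fin dR) ℂ) (v : Fin dS → ℂ) (φ : Fin dR → ℂ) :
    (B ⊗ₖ Q).mulVec (vtens v φ) = vtens (B.mulVec v) (Q.mulVec φ) := by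
  funext p
  simp only [Matrix.mulVec, dotProduct, vtens, Matrix.kroneckerMap_apply, Fintype.sum_prod_type,
    Finset.sum_mul_sum]
  refine Finset.sum_congr rfl fun i _ => Finset.sum_congr rfl fun j _ => ?_
  ring

theorem vtens_dot {dS dR : ℕ} (v w : Fin dS → ℂ) (φ ψ : Fin dR → ℂ) :
    star (vtens v φ) ⬝ᵥ vtens w ψ = (star v ⬝ᵥ w) * (star φ ⬝ᵥ ψ) := by
  simp only [dotProduct, vtens, Pi.star_apply, star_mul', Fintype.sum_prod_type,
    Finset.sum_mul_sum]
  refine Finset.sum_congr rfl fun i _ => Finset.sum_congr rfl fun j _ => ?_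
  ring

/-- **Exact recovery of absolute quantities for finite groups**: if the reference state `φ` is
perfectly localised at the identity (`P_e φ = φ`), then every expectation value of `A` equals
that of the relativised `¥(A)` in `v ⊗ φ`. -/
theorem yenFin_exact_recovery {G : Type*} [Fintype G] [Group G] {dS dR : ℕ}
    (US : G → Matrix (Fin dS) (Fin dS) ℂ)
    (hUSunit : ∀ g, US g ∈ Matrix.unitaryGroup (Fin dS) ℂ)
    (hUShom : ∀ g h, US (g * h) = US g * US h) (hUSone : US 1 = 1)
    (P : G → Matrix (Fin dR) (Fin dR) ℂ)
    (hPh : ∀ g, (P g).IsHermitian)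
    (hPi : ∀ g, P g * P g = P g)
    (hPo : ∀ g h, g ≠ h → P g * P h = 0)
    (hPs : ∑ g : G, P g = 1)
    (φ : Fin dR → ℂ) (hφunit : star φ ⬝ᵥ φ = 1) (hφloc : (P 1).mulVec φ = φ) :
    ∀ (A : Matrix (Fin dS) (Fin dS) ℂ) (v : Fin dS → ℂ),
      star (vtens v φ) ⬝ᵥ (yenFin US P A).mulVec (vtens v φ) = star v ⬝ᵥ A.mulVec v := by
  intro A v
  have h0 : ∀ g, g ≠ 1 → (P g).mulVec φ = 0 := by
    intro g hg
    rw [← hφloc, Matrix.mulVec_mulVec, hPo g 1 hg, Matrix.zero_mulVec]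
  unfold yenFin
  rw [Matrix.sum_mulVec, dotProduct_sum, Finset.sum_eq_single (1 : G)]
  · rw [kron_mulVec_vtens, vtens_dot, hφloc, hφunit, hUSone]
    simp
  · intro g _ hg
    rw [kron_mulVec_vtens, vtens_dot, h0 g hg]
    simp
  · intro h
    exact absurd (Finset.mem_univ _) h

end
end

section
/- Phase localisation of the canonical-phase localising states: Fix ε ∈ (0,1) and set δ_n = (n+1)^{(ε−1)/2}. Define p_n := (1/(2π(n+1))) ∫_{{θ ∈ [−π,π] : |θ| ≥ δ_n/2}} (1 − cos((n+1)θ))/(1 − cos θ) dθ. Then p_n ≤ (1/(n+1)) · 1/(1 − cos(δ_n/2)) for every n, and p_n → 0 as n → ∞. Consequently, the canonical phase distribution of the state φ_n = (n+1)^{−1/2} Σ_{j=0}^n |j⟩ concentrates on the shrinking intervals [−δ_n/2, δ_n/2] around 0 as n → ∞. -/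
open MeasureTheory Filter Real

noncomputable section

/-- The localisation width `δ_n = (n+1)^{(ε−1)/2}`. -/
def locWidth (ε : ℝ) (n : ℕ) : ℝ := ((n : ℝ) + 1) ^ ((ε - 1) / 2)

/-- `p_n`: the probability that the canonical phase of
`φ_n = (n+1)^{−1/2} ∑_{j=0}^n |j⟩` lies outside `[−δ_n/2, δ_n/2]`, written via the
canonical phase density `(1 − cos((n+1)θ))/(2π(n+1)(1 − cos θ))` on `[−π, π]`. -/
def pseq (ε : ℝ) (n : ℕ) : ℝ :=
  (1 / (2 * π * ((n : ℝ) + 1))) *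
    ∫ θ in {θ : ℝ | θ ∈ Set.Icc (-π) π ∧ locWidth ε n / 2 ≤ |θ|},
      (1 - Real.cos (((n : ℝ) + 1) * θ)) / (1 - Real.cos θ)

lemma locWidth_pos (ε : ℝ) (n : ℕ) : 0 < locWidth ε n := by
  unfold locWidth; positivity

lemma locWidth_le_one (ε : ℝ) (hε1 : ε < 1) (n : ℕ) : locWidth ε n ≤ 1 := by
  unfold locWidth
  apply Real.rpow_le_one_of_one_le_of_nonpos
  · have : (0:ℝ) ≤ n := n.cast_nonneg
    linarith
  · linarith

lemma one_sub_cos_lower (ε : ℝ) (hε1 : ε < 1) (n : ℕ) :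
    2 / π ^ 2 * (locWidth ε n / 2) ^ 2 ≤ 1 - Real.cos (locWidth ε n / 2) := by
  have h0 := locWidth_pos ε n
  have h1 := locWidth_le_one ε hε1 n
  have := Real.cos_le_one_sub_mul_cos_sq (x := locWidth ε n / 2) (by
    rw [abs_of_pos (by linarith)]; linarith [Real.pi_gt_three])
  linarith

lemma integral_num (n : ℕ) :
    ∫ θ in Set.Icc (-π) π, (1 - Real.cos (((n : ℝ) + 1) * θ)) = 2 * π := by
  have hn : ((n : ℝ) + 1) ≠ 0 := by positivity
  rw [integral_Icc_eq_integral_Ioc, ← intervalIntegral.integral_of_le (by linarith [Real.pi_pos]),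
    intervalIntegral.integral_sub (by simp)
      ((by fun_prop : Continuous fun θ : ℝ => Real.cos (((n : ℝ) + 1) * θ)).intervalIntegrable _ _),
    intervalIntegral.integral_comp_mul_left (fun x => Real.cos x) hn, integral_cos]
  have h : Real.sin (((n : ℝ) + 1) * π) = 0 := by
    have := Real.sin_nat_mul_pi (n + 1)
    push_cast at this
    exact this
  have h2 : ((n : ℝ) + 1) * -π = -(((n : ℝ) + 1) * π) := by ring
  rw [h2, Real.sin_neg, h]
  simp
  ring

lemma pseq_le (ε : ℝ) (hε1 : ε < 1) (n : ℕ) :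
    pseq ε n ≤ (1 / ((n : ℝ) + 1)) * (1 / (1 - Real.cos (locWidth ε n / 2))) := by
  have h0 := locWidth_pos ε n
  have h1 := locWidth_le_one ε hε1 n
  have hlow := one_sub_cos_lower ε hε1 n
  have hc : 0 < 1 - Real.cos (locWidth ε n / 2) := lt_of_lt_of_le (by positivity) hlow
  set c := 1 - Real.cos (locWidth ε n / 2) with hcdef
  set S := {θ : ℝ | θ ∈ Set.Icc (-π) π ∧ locWidth ε n / 2 ≤ |θ|} with hS
  have hSm : MeasurableSet S :=
    measurableSet_Icc.inter (measurableSet_le measurable_const measurable_id.abs)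
  have hSs : S ⊆ Set.Icc (-π) π := fun x hx => hx.1
  have hnum : ∀ θ : ℝ, 0 ≤ 1 - Real.cos (((n : ℝ) + 1) * θ) := fun θ => by
    linarith [Real.cos_le_one (((n : ℝ) + 1) * θ)]
  have hint : IntegrableOn (fun θ : ℝ => (1 - Real.cos (((n : ℝ) + 1) * θ)) / c)
      (Set.Icc (-π) π) :=
    (by fun_prop : Continuous fun θ : ℝ => (1 - Real.cos (((n : ℝ) + 1) * θ)) / c).integrableOn_Icc
  have key : ∫ θ in S, (1 - Real.cos (((n : ℝ) + 1) * θ)) / (1 - Real.cos θ) ≤ 2 * π / c := by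
    calc _ ≤ ∫ θ in S, (1 - Real.cos (((n : ℝ) + 1) * θ)) / c := by
          apply integral_mono_of_nonneg
          · exact Eventually.of_forall fun θ =>
              div_nonneg (hnum θ) (by linarith [Real.cos_le_one θ])
          · exact hint.mono_set hSs
          · refine (ae_restrict_iff' hSm).2 (Eventually.of_forall fun θ hθ => ?_)
            refine div_le_div_of_nonneg_left (hnum θ) hc ?_
            have : Real.cos |θ| ≤ Real.cos (locWidth ε n / 2) :=
              Real.cos_le_cos_of_nonneg_of_le_pi (by linarith) (abs_le.2 hθ.1) hθ.2
            rw [Real.cos_abs] at this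
            linarith
      _ ≤ ∫ θ in Set.Icc (-π) π, (1 - Real.cos (((n : ℝ) + 1) * θ)) / c :=
          setIntegral_mono_set hint
            (Eventually.of_forall fun θ => div_nonneg (hnum θ) hc.le) hSs.eventuallyLE
      _ = 2 * π / c := by rw [integral_div, integral_num]
  have hπ := Real.pi_pos
  calc pseq ε n ≤ (1 / (2 * π * ((n : ℝ) + 1))) * (2 * π / c) := by
        unfold pseq
        exact mul_le_mul_of_nonneg_left key (by positivity)
    _ = _ := by field_simp

lemma pseq_nonneg (ε : ℝ) (n : ℕ) : 0 ≤ pseq ε n := by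
  unfold pseq
  have hπ := Real.pi_pos
  refine mul_nonneg (by positivity) (integral_nonneg fun θ => div_nonneg ?_ ?_)
  · linarith [Real.cos_le_one (((n : ℝ) + 1) * θ)]
  · linarith [Real.cos_le_one θ]

lemma pseq_le_rpow (ε : ℝ) (hε1 : ε < 1) (n : ℕ) :
    pseq ε n ≤ 2 * π ^ 2 * ((n : ℝ) + 1) ^ (-ε) := by
  have h0 := locWidth_pos ε n
  have hπ := Real.pi_pos
  have hlow := one_sub_cos_lower ε hε1 n
  have hN : (0 : ℝ) < (n : ℝ) + 1 := by positivity
  have hsq : locWidth ε n ^ 2 = ((n : ℝ) + 1) ^ ε / ((n : ℝ) + 1) := by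
    unfold locWidth
    rw [← Real.rpow_natCast, ← Real.rpow_mul hN.le, ← Real.rpow_sub_one hN.ne']
    congr 1
    push_cast
    ring
  have he : 0 < ((n : ℝ) + 1) ^ ε := by positivity
  calc pseq ε n ≤ _ := pseq_le ε hε1 n
    _ ≤ (1 / ((n : ℝ) + 1)) * (1 / (2 / π ^ 2 * (locWidth ε n / 2) ^ 2)) := by gcongr
    _ = _ := by
      rw [div_pow, hsq, Real.rpow_neg hN.le]
      field_simp

/-- **Phase localisation of the canonical-phase localising states**: for `ε ∈ (0,1)` and
`δ_n = (n+1)^{(ε−1)/2}`, one has `p_n ≤ (1/(n+1))·1/(1 − cos(δ_n/2))` for every `n`, and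
`p_n → 0`; hence the canonical phase distribution of `φ_n` concentrates on the shrinking
intervals `[−δ_n/2, δ_n/2]`. -/
theorem canonical_phase_localisation (ε : ℝ) (hε0 : 0 < ε) (hε1 : ε < 1) :
    (∀ n : ℕ, pseq ε n ≤ (1 / ((n : ℝ) + 1)) * (1 / (1 - Real.cos (locWidth ε n / 2)))) ∧
    Tendsto (pseq ε) atTop (nhds 0) := by
  refine ⟨fun n => pseq_le ε hε1 n, ?_⟩
  refine squeeze_zero (pseq_nonneg ε) (pseq_le_rpow ε hε1) ?_
  have h1 : Tendsto (fun n : ℕ => (n : ℝ) + 1) atTop atTop :=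
    tendsto_atTop_add_const_right _ _ tendsto_natCast_atTop_atTop
  have h2 := ((tendsto_rpow_neg_atTop hε0).comp h1).const_mul (2 * π ^ 2)
  simpa using h2

end
end

section
/- Commutator–localisation trade-off: Let N_S, N_R be Hermitian matrices (number operators) on ℂ^{d_S}, ℂ^{d_R}, let ω be a state on ℂ^{d_R}, let E be an effect on ℂ^{d_S}⊗ℂ^{d_R} commuting with N_S ⊗ 1 + 1 ⊗ N_R, and let A be an effect on ℂ^{d_S}. Then ‖[A, N_S]‖ ≤ 2·D(Γ_ω(E), A)·‖N_S‖ + 2·Δ_ω(N_R)·(2·D(Γ_ω(E), A) + V(A))^{1/2}, where D(X,Y) = ‖X − Y‖ is the operator-norm distance, V(A) = ‖A − A²‖, and Δ_ω(N_R) = (tr(ω N_R²) − tr(ω N_R)²)^{1/2}. -/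
open Matrix
open scoped Kronecker ComplexOrder

noncomputable section

/-- An effect: a matrix `E` with `0 ≤ E ≤ 1` in the Loewner order. -/
def IsEffect {n : Type*} [Fintype n] [DecidableEq n] (E : Matrix n n ℂ) : Prop :=
  E.PosSemidef ∧ (1 - E).PosSemidef

/-- The (ℓ²-)operator norm of a matrix. -/
def opNorm {d : ℕ} (M : Matrix (Fin d) (Fin d) ℂ) : ℝ :=
  ‖Matrix.toEuclideanCLM (𝕜 := ℂ) M‖

/-- The restriction map `Γ_ω`, the linear map determined by `Γ_ω(A ⊗ B) = tr(ωB)·A`,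
i.e. satisfying `tr(ρ Γ_ω(T)) = tr((ρ ⊗ ω) T)` for all `ρ`. -/
def restrictMap {dS dR : ℕ} (ω : Matrix (Fin dR) (Fin dR) ℂ)
    (T : Matrix (Fin dS × Fin dR) (Fin dS × Fin dR) ℂ) : Matrix (Fin dS) (Fin dS) ℂ :=
  Matrix.of fun i j => ∑ k, ∑ l, ω k l * T (i, l) (j, k)

section helpers
open scoped Matrix.Norms.L2Operator MatrixOrder

theorem aux_norm_mono {n : Type*} [Fintype n] [DecidableEq n] (A B : Matrix n n ℂ)
    (h : A.PosSemidef) (hB : (B - A).PosSemidef) : ‖A‖ ≤ ‖B‖ :=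
  CStarAlgebra.norm_le_norm_of_nonneg_of_le (Matrix.nonneg_iff_posSemidef.2 h) (Matrix.le_iff.2 hB)

theorem aux_norm_le_one {n : Type*} [Fintype n] [DecidableEq n] (A : Matrix n n ℂ)
    (h : IsEffect A) : ‖A‖ ≤ 1 :=
  (CStarAlgebra.norm_le_one_iff_of_nonneg A (Matrix.nonneg_iff_posSemidef.2 h.1)).2
    (Matrix.le_iff.2 h.2)

theorem aux_sub_sq {n : Type*} [Fintype n] [DecidableEq n] (A : Matrix n n ℂ)
    (h : IsEffect A) : (A - A * A).PosSemidef := by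
  have h1 := h.2.conjTranspose_mul_mul_same A
  have h2 := h.1.conjTranspose_mul_mul_same (1 - A)
  rw [h.1.isHermitian.eq] at h1
  rw [h.2.isHermitian.eq] at h2
  have h3 := h1.add h2
  convert h3 using 1
  noncomm_ring

theorem aux_main {p n : Type*} [Fintype p] [DecidableEq p] [Fintype n] [DecidableEq n]
    (V : Matrix p n ℂ) (hV : Vᴴ * V = 1) (F M : Matrix p p ℂ) (hF : IsEffect F)
    (hM : M.IsHermitian) (hM0 : Vᴴ * M * V = 0) (c : ℝ) (hc : 0 ≤ c)
    (hMM : Vᴴ * (M * M) * V = (c : ℂ) • 1) :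
    ‖Vᴴ * (F * M - M * F) * V‖ ≤ 2 * √c * √‖Vᴴ * F * V - (Vᴴ * F * V) * (Vᴴ * F * V)‖ := by
  have hFh : Fᴴ = F := hF.1.isHermitian.eq
  have hMh : Mᴴ = M := hM.eq
  set B := Vᴴ * F * V with hB
  have hBh : Bᴴ = B := by
    simp [hB, Matrix.conjTranspose_mul, hFh, Matrix.mul_assoc]
  set X := F * V - V * B with hX
  set Y := M * V with hY
  have hXh : Xᴴ = Vᴴ * F - B * Vᴴ := by
    simp [hX, Matrix.conjTranspose_mul, hFh, hBh]
  have hYh : Yᴴ = Vᴴ * M := by simp [hY, Matrix.conjTranspose_mul, hMh]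
  have hVY : Vᴴ * Y = 0 := by rw [hY, ← Matrix.mul_assoc, hM0]
  have hXY : Xᴴ * Y = Vᴴ * (F * M) * V := by
    rw [hXh, Matrix.sub_mul, Matrix.mul_assoc B, hVY, hY]
    simp [Matrix.mul_assoc]
  have hYX : Yᴴ * X = Vᴴ * (M * F) * V := by
    have := congrArg conjTranspose hXY
    simpa [Matrix.conjTranspose_mul, hFh, hMh, Matrix.mul_assoc] using this
  have hYY : ‖Y‖ * ‖Y‖ ≤ c := by
    rw [← l2_opNorm_conjTranspose_mul_self, hYh, hY]
    have : Vᴴ * M * (M * V) = (c : ℂ) • 1 := by rw [← hMM]; simp [Matrix.mul_assoc]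
    rw [this, norm_smul]
    have h1 : ‖(1 : Matrix n n ℂ)‖ ≤ 1 :=
      aux_norm_le_one 1 ⟨Matrix.PosSemidef.one, by simpa using Matrix.PosSemidef.zero⟩
    have h2 : ‖(c : ℂ)‖ = c := by simp [abs_of_nonneg hc]
    rw [h2]
    nlinarith
  have hXXeq : Xᴴ * X = Vᴴ * (F * F) * V - B * B := by
    have e1 : Vᴴ * F * (V * B) = B * B := by rw [← Matrix.mul_assoc]
    have e2 : B * Vᴴ * (F * V) = B * B := by rw [hB]; simp only [Matrix.mul_assoc]
    have e3 : B * Vᴴ * (V * B) = B * B := by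
      rw [Matrix.mul_assoc, ← Matrix.mul_assoc Vᴴ, hV, Matrix.one_mul]
    have e4 : Vᴴ * F * (F * V) = Vᴴ * (F * F) * V := by simp only [Matrix.mul_assoc]
    rw [hXh, hX, Matrix.sub_mul, Matrix.mul_sub, Matrix.mul_sub, e1, e2, e3, e4]
    abel
  have hXX : ‖X‖ * ‖X‖ ≤ ‖B - B * B‖ := by
    rw [← l2_opNorm_conjTranspose_mul_self]
    apply aux_norm_mono _ _ (Matrix.posSemidef_conjTranspose_mul_self X)
    have := (aux_sub_sq F hF).conjTranspose_mul_mul_same V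
    convert this using 1
    rw [hXXeq, Matrix.mul_sub, Matrix.sub_mul, ← hB]
    abel
  have hXs : ‖X‖ ≤ √‖B - B * B‖ := Real.le_sqrt_of_sq_le (by rw [sq]; exact hXX)
  have hYs : ‖Y‖ ≤ √c := Real.le_sqrt_of_sq_le (by rw [sq]; exact hYY)
  have : Vᴴ * (F * M - M * F) * V = Xᴴ * Y - Yᴴ * X := by
    rw [hXY, hYX, Matrix.mul_sub, Matrix.sub_mul]
  rw [this]
  calc ‖Xᴴ * Y - Yᴴ * X‖ ≤ ‖Xᴴ * Y‖ + ‖Yᴴ * X‖ := norm_sub_le _ _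
    _ ≤ ‖X‖ * ‖Y‖ + ‖Y‖ * ‖X‖ := by
      refine add_le_add ((l2_opNorm_mul _ _).trans ?_) ((l2_opNorm_mul _ _).trans ?_) <;>
        rw [l2_opNorm_conjTranspose]
    _ = 2 * (‖Y‖ * ‖X‖) := by ring
    _ ≤ 2 * (√c * √‖B - B * B‖) := by gcongr
    _ = _ := by ring

/-- The purification isometry. -/
def auxV (dS : ℕ) {dR : ℕ} (W : Matrix (Fin dR) (Fin dR) ℂ) :
    Matrix ((Fin dS × Fin dR) × Fin dR) (Fin dS) ℂ :=
  Matrix.of fun x j => if x.1.1 = j then W x.1.2 x.2 else 0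

theorem auxV_restrict {dS dR : ℕ} (W : Matrix (Fin dR) (Fin dR) ℂ)
    (T : Matrix (Fin dS × Fin dR) (Fin dS × Fin dR) ℂ) :
    (auxV dS W)ᴴ * (T ⊗ₖ (1 : Matrix (Fin dR) (Fin dR) ℂ)) * auxV dS W
      = restrictMap (W * Wᴴ) T := by
  ext i j
  simp only [auxV, restrictMap, Matrix.mul_apply, Matrix.conjTranspose_apply, Matrix.of_apply,
    Matrix.kroneckerMap_apply, Fintype.sum_prod_type, Matrix.one_apply]
  simp [Finset.sum_mul, apply_ite]
  refine Finset.sum_congr rfl fun k _ => ?_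
  rw [Finset.sum_comm]
  refine Finset.sum_congr rfl fun l _ => Finset.sum_congr rfl fun m _ => ?_
  ring

theorem aux_restrict_one {dS dR : ℕ} (ω M : Matrix (Fin dR) (Fin dR) ℂ) :
    restrictMap ω ((1 : Matrix (Fin dS) (Fin dS) ℂ) ⊗ₖ M) = (ω * M).trace • 1 := by
  ext i j
  simp only [restrictMap, Matrix.of_apply, Matrix.kroneckerMap_apply, Matrix.trace,
    Matrix.diag_apply, Matrix.mul_apply, Matrix.smul_apply, smul_eq_mul, Finset.sum_mul]
  refine Finset.sum_congr rfl fun k _ => Finset.sum_congr rfl fun l _ => ?_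
  ring

theorem aux_restrict_sub {dS dR : ℕ} (ω : Matrix (Fin dR) (Fin dR) ℂ)
    (T U : Matrix (Fin dS × Fin dR) (Fin dS × Fin dR) ℂ) :
    restrictMap ω (T - U) = restrictMap ω T - restrictMap ω U := by
  ext i j
  simp [restrictMap, mul_sub, Finset.sum_sub_distrib]

theorem aux_restrict_mul {dS dR : ℕ} (ω : Matrix (Fin dR) (Fin dR) ℂ)
    (T : Matrix (Fin dS × Fin dR) (Fin dS × Fin dR) ℂ) (N : Matrix (Fin dS) (Fin dS) ℂ) :
    restrictMap ω (T * (N ⊗ₖ (1 : Matrix (Fin dR) (Fin dR) ℂ))) = restrictMap ω T * N := by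
  ext i j
  simp only [restrictMap, Matrix.mul_apply, Matrix.of_apply,
    Matrix.kroneckerMap_apply, Fintype.sum_prod_type, Matrix.one_apply]
  simp only [mul_ite, mul_one, mul_zero, Finset.sum_ite_eq', Finset.mem_univ, if_true,
    Finset.mul_sum, Finset.sum_mul]
  conv_rhs => rw [Finset.sum_comm]
  refine Finset.sum_congr rfl fun k _ => ?_
  conv_rhs => rw [Finset.sum_comm]
  refine Finset.sum_congr rfl fun l _ => Finset.sum_congr rfl fun m _ => ?_
  ring

theorem aux_mul_restrict {dS dR : ℕ} (ω : Matrix (Fin dR) (Fin dR) ℂ)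
    (T : Matrix (Fin dS × Fin dR) (Fin dS × Fin dR) ℂ) (N : Matrix (Fin dS) (Fin dS) ℂ) :
    restrictMap ω ((N ⊗ₖ (1 : Matrix (Fin dR) (Fin dR) ℂ)) * T) = N * restrictMap ω T := by
  ext i j
  simp only [restrictMap, Matrix.mul_apply, Matrix.of_apply,
    Matrix.kroneckerMap_apply, Fintype.sum_prod_type, Matrix.one_apply]
  simp only [mul_ite, mul_one, mul_zero, ite_mul, zero_mul, Finset.sum_ite_eq, Finset.mem_univ,
    if_true, Finset.mul_sum]
  conv_rhs => rw [Finset.sum_comm]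
  refine Finset.sum_congr rfl fun k _ => ?_
  conv_rhs => rw [Finset.sum_comm]
  refine Finset.sum_congr rfl fun l _ => Finset.sum_congr rfl fun m _ => ?_
  ring

theorem aux_sub_kron {m n : Type*} (A B : Matrix m m ℂ) (C : Matrix n n ℂ) :
    (A - B) ⊗ₖ C = A ⊗ₖ C - B ⊗ₖ C := by
  ext i j
  simp [Matrix.kroneckerMap_apply, sub_mul]

theorem aux_kron_sub {m n : Type*} (A B : Matrix m m ℂ) (C : Matrix n n ℂ) :
    C ⊗ₖ (A - B) = C ⊗ₖ A - C ⊗ₖ B := by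
  ext i j
  simp [Matrix.kroneckerMap_apply, mul_sub]

end helpers

open scoped Matrix.Norms.L2Operator MatrixOrder in
/-- **Commutator–localisation trade-off**: for an effect `E` on `S+R` commuting with the
additive conserved quantity `N_S ⊗ 1 + 1 ⊗ N_R` and any effect `A` of `S`,
`‖[A,N_S]‖ ≤ 2 D(Γ_ω(E),A) ‖N_S‖ + 2 Δ_ω(N_R) (2 D(Γ_ω(E),A) + V(A))^{1/2}`. -/
theorem commutator_localisation_tradeoff {dS dR : ℕ}
    (NS : Matrix (Fin dS) (Fin dS) ℂ) (hNS : NS.IsHermitian)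
    (NR : Matrix (Fin dR) (Fin dR) ℂ) (hNR : NR.IsHermitian)
    (ω : Matrix (Fin dR) (Fin dR) ℂ) (hω : ω.PosSemidef) (hωtr : ω.trace = 1)
    (E : Matrix (Fin dS × Fin dR) (Fin dS × Fin dR) ℂ) (hE : IsEffect E)
    (hEcomm : (NS ⊗ₖ (1 : Matrix (Fin dR) (Fin dR) ℂ)
        + (1 : Matrix (Fin dS) (Fin dS) ℂ) ⊗ₖ NR) * E
      = E * (NS ⊗ₖ (1 : Matrix (Fin dR) (Fin dR) ℂ)
        + (1 : Matrix (Fin dS) (Fin dS) ℂ) ⊗ₖ NR))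
    (A : Matrix (Fin dS) (Fin dS) ℂ) (hA : IsEffect A) :
    opNorm (A * NS - NS * A) ≤
      2 * opNorm (restrictMap ω E - A) * opNorm NS +
      2 * Real.sqrt (((ω * (NR * NR)).trace).re - (((ω * NR).trace).re) ^ 2) *
        Real.sqrt (2 * opNorm (restrictMap ω E - A) + opNorm (A - A * A)) := by
  have hO : ∀ M : Matrix (Fin dS) (Fin dS) ℂ, opNorm M = ‖M‖ := fun _ => rfl
  simp only [hO]
  obtain ⟨W, hW⟩ : ∃ W : Matrix (Fin dR) (Fin dR) ℂ, ω = W * Wᴴ := by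
    obtain ⟨B, hB⟩ := CStarAlgebra.nonneg_iff_eq_star_mul_self.mp hω.nonneg
    exact ⟨Bᴴ, by rw [hB, Matrix.conjTranspose_conjTranspose]; rfl⟩
  set B := restrictMap ω E with hB
  set μ : ℝ := ((ω * NR).trace).re with hμ
  have htr : (ω * NR).trace = (μ : ℂ) := by
    have : star (ω * NR).trace = (ω * NR).trace := by
      rw [← Matrix.trace_conjTranspose, Matrix.conjTranspose_mul, hNR.eq, hω.isHermitian.eq,
        Matrix.trace_mul_comm]
    exact (Complex.conj_eq_iff_re.1 this).symm
  have htr2 : (ω * (NR * NR)).trace = ((((ω * (NR * NR)).trace).re : ℝ) : ℂ) := by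
    have : star (ω * (NR * NR)).trace = (ω * (NR * NR)).trace := by
      rw [← Matrix.trace_conjTranspose, Matrix.conjTranspose_mul, Matrix.conjTranspose_mul,
        hNR.eq, hω.isHermitian.eq, Matrix.trace_mul_comm]
    exact (Complex.conj_eq_iff_re.1 this).symm
  set c : ℝ := ((ω * (NR * NR)).trace).re - μ ^ 2 with hc
  set N' := NR - (μ : ℂ) • (1 : Matrix (Fin dR) (Fin dR) ℂ) with hN'
  have hN'h : N'.IsHermitian := by
    refine hNR.sub ?_
    simp [Matrix.IsHermitian, Matrix.conjTranspose_smul]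
  have hN1 : (ω * N').trace = 0 := by
    simp [hN', Matrix.mul_sub, htr, hωtr]
  have hN2 : (ω * (N' * N')).trace = (c : ℂ) := by
    have : N' * N' = NR * NR - (2 * μ : ℂ) • NR + (μ * μ : ℂ) • 1 := by
      simp only [hN', Matrix.mul_sub, Matrix.sub_mul, Matrix.smul_mul, Matrix.mul_smul,
        Matrix.one_mul, Matrix.mul_one, smul_smul, two_mul, add_smul, smul_sub]
      abel
    rw [this]
    simp only [Matrix.mul_add, Matrix.mul_sub, Matrix.mul_smul, Matrix.trace_add,
      Matrix.trace_sub, Matrix.trace_smul, Matrix.mul_one, htr, hωtr, smul_eq_mul]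
    rw [htr2, hc]
    push_cast
    ring
  have hc0 : 0 ≤ c := by
    have h1 := (Matrix.posSemidef_conjTranspose_mul_self (N' * W)).trace_nonneg
    have h2 : ((N' * W)ᴴ * (N' * W)).trace = (c : ℂ) := by
      rw [← hN2, hW, Matrix.conjTranspose_mul, hN'h.eq, Matrix.mul_assoc W, Matrix.trace_mul_comm W]
      simp only [Matrix.mul_assoc]
    rw [h2] at h1
    exact_mod_cast h1
  have hone : restrictMap ω (1 : Matrix (Fin dS × Fin dR) (Fin dS × Fin dR) ℂ) = 1 := by
    have := aux_restrict_one (dS := dS) ω 1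
    rwa [Matrix.one_kronecker_one, Matrix.mul_one, hωtr, one_smul] at this
  set V := auxV dS W with hVdef
  have hr : ∀ T : Matrix (Fin dS × Fin dR) (Fin dS × Fin dR) ℂ,
      Vᴴ * (T ⊗ₖ (1 : Matrix (Fin dR) (Fin dR) ℂ)) * V = restrictMap ω T := by
    intro T; rw [hW]; exact auxV_restrict W T
  have hV : Vᴴ * V = 1 := by
    rw [← hone, ← hr 1, Matrix.one_kronecker_one, Matrix.mul_one]
  have hps : ∀ T : Matrix (Fin dS × Fin dR) (Fin dS × Fin dR) ℂ, T.PosSemidef →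
      (T ⊗ₖ (1 : Matrix (Fin dR) (Fin dR) ℂ)).PosSemidef :=
    fun T h => h.kronecker Matrix.PosSemidef.one
  have hF : IsEffect (E ⊗ₖ (1 : Matrix (Fin dR) (Fin dR) ℂ)) := by
    refine ⟨hps _ hE.1, ?_⟩
    have := hps _ hE.2
    rwa [aux_sub_kron, Matrix.one_kronecker_one] at this
  have hBe : IsEffect B := by
    refine ⟨?_, ?_⟩
    · rw [hB, ← hr]; exact hF.1.conjTranspose_mul_mul_same V
    · rw [hB, ← hone, ← aux_restrict_sub, ← hr]
      exact (hps _ hE.2).conjTranspose_mul_mul_same V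
  set Q := (1 : Matrix (Fin dS) (Fin dS) ℂ) ⊗ₖ N' with hQ
  have hQQ : Q * Q = (1 : Matrix (Fin dS) (Fin dS) ℂ) ⊗ₖ (N' * N') := by
    rw [hQ, ← Matrix.mul_kronecker_mul, Matrix.one_mul]
  have hkm : ∀ T U : Matrix (Fin dS × Fin dR) (Fin dS × Fin dR) ℂ,
      (T ⊗ₖ (1 : Matrix (Fin dR) (Fin dR) ℂ)) * (U ⊗ₖ (1 : Matrix (Fin dR) (Fin dR) ℂ))
        = (T * U) ⊗ₖ (1 : Matrix (Fin dR) (Fin dR) ℂ) := by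
    intro T U; rw [← Matrix.mul_kronecker_mul, Matrix.one_mul]
  have hmain := aux_main V hV (E ⊗ₖ (1 : Matrix (Fin dR) (Fin dR) ℂ))
    (Q ⊗ₖ (1 : Matrix (Fin dR) (Fin dR) ℂ)) hF
    (by simp [Matrix.IsHermitian, hQ, Matrix.conjTranspose_kronecker, hN'h.eq])
    (by rw [hr, aux_restrict_one, hN1, zero_smul]) c hc0
    (by rw [hkm, hr, hQQ, aux_restrict_one, hN2])
  rw [hkm, hkm, ← aux_sub_kron, hr, hr, ← hB] at hmain
  have hcomm : B * NS - NS * B = - restrictMap ω (E * Q - Q * E) := by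
    have h1 : E * (NS ⊗ₖ 1) - (NS ⊗ₖ 1) * E = 0 - (E * Q - Q * E) := by
      have hQ2 : Q = (1 : Matrix (Fin dS) (Fin dS) ℂ) ⊗ₖ NR - (μ : ℂ) • 1 := by
        rw [hQ, hN', aux_kron_sub, Matrix.kronecker_smul, Matrix.one_kronecker_one]
      rw [hQ2]
      simp only [Matrix.mul_sub, Matrix.sub_mul, Matrix.smul_mul, Matrix.mul_smul,
        Matrix.one_mul, Matrix.mul_one]
      rw [Matrix.add_mul, Matrix.mul_add] at hEcomm
      have h0 := sub_eq_zero.2 hEcomm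
      rw [← sub_eq_zero, ← neg_eq_zero]
      refine Eq.trans ?_ h0
      abel
    rw [hB, ← aux_restrict_mul, ← aux_mul_restrict, ← aux_restrict_sub, h1, aux_restrict_sub]
    ext i j
    simp [restrictMap]
  have hBB : ‖B - B * B‖ ≤ 2 * ‖B - A‖ + ‖A - A * A‖ := by
    have h1 : B - B * B = (1 - B) * (B - A) - (B - A) * A + (A - A * A) := by noncomm_ring
    have hb : ‖1 - B‖ ≤ 1 := aux_norm_le_one _ ⟨hBe.2, by simpa using hBe.1⟩
    have ha : ‖A‖ ≤ 1 := aux_norm_le_one _ hA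
    rw [h1]
    calc _ ≤ ‖(1 - B) * (B - A)‖ + ‖(B - A) * A‖ + ‖A - A * A‖ :=
          (norm_add_le _ _).trans (by gcongr; exact norm_sub_le _ _)
      _ ≤ ‖1 - B‖ * ‖B - A‖ + ‖B - A‖ * ‖A‖ + ‖A - A * A‖ := by
          gcongr <;> exact norm_mul_le _ _
      _ ≤ 1 * ‖B - A‖ + ‖B - A‖ * 1 + ‖A - A * A‖ := by gcongr
      _ = _ := by ring
  have hdec : A * NS - NS * A = (B * NS - NS * B) - ((B - A) * NS - NS * (B - A)) := by
    noncomm_ring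
  have h3 : ‖(B - A) * NS - NS * (B - A)‖ ≤ 2 * ‖B - A‖ * ‖NS‖ := by
    calc _ ≤ ‖(B - A) * NS‖ + ‖NS * (B - A)‖ := norm_sub_le _ _
      _ ≤ ‖B - A‖ * ‖NS‖ + ‖NS‖ * ‖B - A‖ := by gcongr <;> exact norm_mul_le _ _
      _ = _ := by ring
  have h4 : ‖B * NS - NS * B‖ ≤ 2 * √c * √(2 * ‖B - A‖ + ‖A - A * A‖) := by
    rw [hcomm, norm_neg]
    refine hmain.trans ?_
    gcongr
  rw [hdec]
  refine (norm_sub_le _ _).trans ?_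
  linarith

end
end

section
/- Symmetry of mutual coherence: For states ρ_S on ℂ^{d_S} and ρ_R on ℂ^{d_R}, the following are equivalent: (i) there exists an effect E on ℂ^{d_S}⊗ℂ^{d_R} with τ_T(E) = E such that tr((τ_{S*}(ρ_S) ⊗ ρ_R) E) ≠ tr((ρ_S ⊗ ρ_R) E); (ii) there exists an effect E' with τ_T(E') = E' such that tr((ρ_S ⊗ τ_{R*}(ρ_R)) E') ≠ tr((ρ_S ⊗ ρ_R) E'). Moreover, if (i) holds then necessarily τ_{S*}(ρ_S) ≠ ρ_S and τ_{R*}(ρ_R) ≠ ρ_R. -/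
open Matrix
open scoped Kronecker ComplexOrder

noncomputable section

/-- The total-number spectral projection `P_N = ∑_{n+m=N} P^S_n ⊗ P^R_m`. -/
def jointProj {dS dR : ℕ} (SS SR : Finset ℤ)
    (PS : ℤ → Matrix (Fin dS) (Fin dS) ℂ) (PR : ℤ → Matrix (Fin dR) (Fin dR) ℂ)
    (N : ℤ) : Matrix (Fin dS × Fin dR) (Fin dS × Fin dR) ℂ :=
  ∑ p ∈ (SS ×ˢ SR).filter (fun p => p.1 + p.2 = N), PS p.1 ⊗ₖ PR p.2

/-- The global dephasing map `τ_T(C) = ∑_N P_N C P_N`. -/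
def tauTotal {dS dR : ℕ} (SS SR : Finset ℤ)
    (PS : ℤ → Matrix (Fin dS) (Fin dS) ℂ) (PR : ℤ → Matrix (Fin dR) (Fin dR) ℂ)
    (C : Matrix (Fin dS × Fin dR) (Fin dS × Fin dR) ℂ) :
    Matrix (Fin dS × Fin dR) (Fin dS × Fin dR) ℂ :=
  ∑ N ∈ (SS ×ˢ SR).image (fun p => p.1 + p.2),
    jointProj SS SR PS PR N * C * jointProj SS SR PS PR N

/-- The local dephasing map `τ(A) = ∑ₙ Pₙ A Pₙ` (also `τ_*` on states). -/
def dephase {d : ℕ} (S : Finset ℤ) (P : ℤ → Matrix (Fin d) (Fin d) ℂ)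
    (A : Matrix (Fin d) (Fin d) ℂ) : Matrix (Fin d) (Fin d) ℂ :=
  ∑ n ∈ S, P n * A * P n

theorem Q_mul {dS dR : ℕ}
    (PS : ℤ → Matrix (Fin dS) (Fin dS) ℂ) (PR : ℤ → Matrix (Fin dR) (Fin dR) ℂ)
    (hPSo : ∀ n m, n ≠ m → PS n * PS m = 0)
    (hPRo : ∀ n m, n ≠ m → PR n * PR m = 0)
    (p q : ℤ × ℤ) (h : p ≠ q) :
    (PS p.1 ⊗ₖ PR p.2) * (PS q.1 ⊗ₖ PR q.2) = 0 := by
  rw [← Matrix.mul_kronecker_mul]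
  by_cases h1 : p.1 = q.1
  · have h2 : p.2 ≠ q.2 := fun h2 => h (Prod.ext h1 h2)
    rw [hPRo _ _ h2, Matrix.kronecker_zero]
  · rw [hPSo _ _ h1, Matrix.zero_kronecker]

theorem Q_E_Q {dS dR : ℕ} (SS SR : Finset ℤ)
    (PS : ℤ → Matrix (Fin dS) (Fin dS) ℂ) (PR : ℤ → Matrix (Fin dR) (Fin dR) ℂ)
    (hPSo : ∀ n m, n ≠ m → PS n * PS m = 0)
    (hPRo : ∀ n m, n ≠ m → PR n * PR m = 0)
    (E : Matrix (Fin dS × Fin dR) (Fin dS × Fin dR) ℂ)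
    (hE : tauTotal SS SR PS PR E = E)
    (p q : ℤ × ℤ) (h : p.1 + p.2 ≠ q.1 + q.2) :
    (PS p.1 ⊗ₖ PR p.2) * E * (PS q.1 ⊗ₖ PR q.2) = 0 := by
  have hl : ∀ N, p.1 + p.2 ≠ N → (PS p.1 ⊗ₖ PR p.2) * jointProj SS SR PS PR N = 0 := by
    intro N hN
    rw [jointProj, Finset.mul_sum]
    refine Finset.sum_eq_zero fun r hr => Q_mul PS PR hPSo hPRo _ _ ?_
    rintro rfl
    exact hN (Finset.mem_filter.1 hr).2
  have hr : ∀ N, q.1 + q.2 ≠ N → jointProj SS SR PS PR N * (PS q.1 ⊗ₖ PR q.2) = 0 := by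
    intro N hN
    rw [jointProj, Finset.sum_mul]
    refine Finset.sum_eq_zero fun r hr => Q_mul PS PR hPSo hPRo _ _ ?_
    rintro rfl
    exact hN (Finset.mem_filter.1 hr).2
  rw [← hE, tauTotal, Finset.mul_sum, Finset.sum_mul]
  refine Finset.sum_eq_zero fun N _ => ?_
  by_cases hN : p.1 + p.2 = N
  · have : q.1 + q.2 ≠ N := fun h' => h (hN.trans h'.symm)
    rw [Matrix.mul_assoc, Matrix.mul_assoc (_ * E), hr N this]
    simp
  · rw [← Matrix.mul_assoc, ← Matrix.mul_assoc, hl N hN]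
    simp

theorem key {dS dR : ℕ} (SS SR : Finset ℤ)
    (PS : ℤ → Matrix (Fin dS) (Fin dS) ℂ) (PR : ℤ → Matrix (Fin dR) (Fin dR) ℂ)
    (hPSo : ∀ n m, n ≠ m → PS n * PS m = 0) (hPSsum : ∑ n ∈ SS, PS n = 1)
    (hPRo : ∀ n m, n ≠ m → PR n * PR m = 0) (hPRsum : ∑ m ∈ SR, PR m = 1)
    (ρS : Matrix (Fin dS) (Fin dS) ℂ) (ρR : Matrix (Fin dR) (Fin dR) ℂ)
    (E : Matrix (Fin dS × Fin dR) (Fin dS × Fin dR) ℂ)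
    (hE : tauTotal SS SR PS PR E = E) :
    ((dephase SS PS ρS ⊗ₖ ρR) * E).trace = ((ρS ⊗ₖ dephase SR PR ρR) * E).trace := by
  have hQ := Q_E_Q SS SR PS PR hPSo hPRo E hE
  have hS : ∀ n, PS n ⊗ₖ (1 : Matrix (Fin dR) (Fin dR) ℂ) = ∑ m ∈ SR, PS n ⊗ₖ PR m := by
    intro n
    rw [← hPRsum]
    exact map_sum (Matrix.kroneckerBilinear (R := ℂ) (PS n)) _ _
  have hR : ∀ m, (1 : Matrix (Fin dS) (Fin dS) ℂ) ⊗ₖ PR m = ∑ n ∈ SS, PS n ⊗ₖ PR m := by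
    intro m
    rw [← hPSsum]
    exact map_sum ((Matrix.kroneckerBilinear (R := ℂ)).flip (PR m)) _ _
  have hS' : dephase SS PS ρS ⊗ₖ ρR = ∑ n ∈ SS,
      (PS n ⊗ₖ (1 : Matrix (Fin dR) (Fin dR) ℂ)) * (ρS ⊗ₖ ρR) * (PS n ⊗ₖ 1) := by
    simp only [← Matrix.mul_kronecker_mul, Matrix.one_mul, Matrix.mul_one]
    exact map_sum ((Matrix.kroneckerBilinear (R := ℂ)).flip ρR) _ _
  have hR' : ρS ⊗ₖ dephase SR PR ρR = ∑ m ∈ SR,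
      ((1 : Matrix (Fin dS) (Fin dS) ℂ) ⊗ₖ PR m) * (ρS ⊗ₖ ρR) * (1 ⊗ₖ PR m) := by
    simp only [← Matrix.mul_kronecker_mul, Matrix.one_mul, Matrix.mul_one]
    exact map_sum (Matrix.kroneckerBilinear (R := ℂ) ρS) _ _
  have cyc : ∀ A B : Matrix (Fin dS × Fin dR) (Fin dS × Fin dR) ℂ,
      (A * B * A * E).trace = (B * (A * E * A)).trace := by
    intro A B
    rw [Matrix.mul_assoc, Matrix.mul_assoc, Matrix.trace_mul_comm]
    simp only [Matrix.mul_assoc]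
  have e1 : ∑ n ∈ SS, (PS n ⊗ₖ (1 : Matrix (Fin dR) (Fin dR) ℂ)) * E * (PS n ⊗ₖ 1)
      = ∑ n ∈ SS, ∑ m ∈ SR, (PS n ⊗ₖ PR m) * E * (PS n ⊗ₖ PR m) := by
    refine Finset.sum_congr rfl fun n _ => ?_
    rw [hS, Finset.sum_mul, Finset.sum_mul]
    refine Finset.sum_congr rfl fun m hm => ?_
    rw [Finset.mul_sum]
    refine Finset.sum_eq_single_of_mem m hm fun m' _ hne => ?_
    exact hQ (n, m) (n, m') (fun h => hne (by simpa using h.symm))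
  have e2 : ∑ m ∈ SR, ((1 : Matrix (Fin dS) (Fin dS) ℂ) ⊗ₖ PR m) * E * (1 ⊗ₖ PR m)
      = ∑ n ∈ SS, ∑ m ∈ SR, (PS n ⊗ₖ PR m) * E * (PS n ⊗ₖ PR m) := by
    rw [Finset.sum_comm]
    refine Finset.sum_congr rfl fun m _ => ?_
    rw [hR, Finset.sum_mul, Finset.sum_mul]
    refine Finset.sum_congr rfl fun n hn => ?_
    rw [Finset.mul_sum]
    refine Finset.sum_eq_single_of_mem n hn fun n' _ hne => ?_
    exact hQ (n, m) (n', m) (fun h => hne (by simpa using h.symm))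
  rw [hS', hR', Finset.sum_mul, Finset.sum_mul, Matrix.trace_sum, Matrix.trace_sum]
  simp only [cyc]
  rw [← Matrix.trace_sum, ← Matrix.trace_sum, ← Finset.mul_sum, ← Finset.mul_sum, e1, e2]

/-- **Symmetry of mutual coherence**: an invariant effect witnesses
`τ_{S*}(ρ_S) ⊗ ρ_R ≁ ρ_S ⊗ ρ_R` iff one witnesses `ρ_S ⊗ τ_{R*}(ρ_R) ≁ ρ_S ⊗ ρ_R`; and then
necessarily both `τ_{S*}(ρ_S) ≠ ρ_S` and `τ_{R*}(ρ_R) ≠ ρ_R`. -/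
theorem mutual_coherence_symmetry {dS dR : ℕ}
    (SS SR : Finset ℤ)
    (PS : ℤ → Matrix (Fin dS) (Fin dS) ℂ) (PR : ℤ → Matrix (Fin dR) (Fin dR) ℂ)
    (hPSh : ∀ n, (PS n).IsHermitian) (hPSi : ∀ n, PS n * PS n = PS n)
    (hPSo : ∀ n m, n ≠ m → PS n * PS m = 0)
    (hPSsupp : ∀ n, n ∉ SS → PS n = 0) (hPSsum : ∑ n ∈ SS, PS n = 1)
    (hPRh : ∀ m, (PR m).IsHermitian) (hPRi : ∀ m, PR m * PR m = PR m)
    (hPRo : ∀ n m, n ≠ m → PR n * PR m = 0)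
    (hPRsupp : ∀ m, m ∉ SR → PR m = 0) (hPRsum : ∑ m ∈ SR, PR m = 1)
    (ρS : Matrix (Fin dS) (Fin dS) ℂ) (hρS : ρS.PosSemidef) (hρStr : ρS.trace = 1)
    (ρR : Matrix (Fin dR) (Fin dR) ℂ) (hρR : ρR.PosSemidef) (hρRtr : ρR.trace = 1) :
    ((∃ E : Matrix (Fin dS × Fin dR) (Fin dS × Fin dR) ℂ,
        E.PosSemidef ∧ (1 - E).PosSemidef ∧ tauTotal SS SR PS PR E = E ∧
        ((dephase SS PS ρS ⊗ₖ ρR) * E).trace ≠ ((ρS ⊗ₖ ρR) * E).trace)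
      ↔ (∃ E : Matrix (Fin dS × Fin dR) (Fin dS × Fin dR) ℂ,
        E.PosSemidef ∧ (1 - E).PosSemidef ∧ tauTotal SS SR PS PR E = E ∧
        ((ρS ⊗ₖ dephase SR PR ρR) * E).trace ≠ ((ρS ⊗ₖ ρR) * E).trace)) ∧
    ((∃ E : Matrix (Fin dS × Fin dR) (Fin dS × Fin dR) ℂ,
        E.PosSemidef ∧ (1 - E).PosSemidef ∧ tauTotal SS SR PS PR E = E ∧
        ((dephase SS PS ρS ⊗ₖ ρR) * E).trace ≠ ((ρS ⊗ₖ ρR) * E).trace) →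
      dephase SS PS ρS ≠ ρS ∧ dephase SR PR ρR ≠ ρR) := by
  have K := key SS SR PS PR hPSo hPSsum hPRo hPRsum ρS ρR
  refine ⟨⟨?_, ?_⟩, ?_⟩
  · rintro ⟨E, h0, h1, hE, hne⟩
    exact ⟨E, h0, h1, hE, K E hE ▸ hne⟩
  · rintro ⟨E, h0, h1, hE, hne⟩
    exact ⟨E, h0, h1, hE, (K E hE).symm ▸ hne⟩
  · rintro ⟨E, h0, h1, hE, hne⟩
    refine ⟨fun h => hne (by rw [h]), fun h => hne ?_⟩
    rw [K E hE, h]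

end
end
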